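/- Unrestricted unrolling is derivable in Milner's star fragment: for every star expression e (guarded or not), SL* ⊢ e* = e·e* + 1. -/

import Mathlib

/-- Star expressions for the semilattice theory (Milner's star fragment):
`e ::= 0 | 1 | a | e1 + e2 | e1·e2 | e*`. -/
inductive SExp (A : Type) : Type
  | zero : SExp A
  | one : SExp A
  | act : A → SExp A
  | add : SExp A → SExp A → SExp A
  | seq : SExp A → SExp A → SExp A
  | star : SExp A → SExp A
  deriving DecidableEq

namespace SExp

variable {A : Type} [DecidableEq A]

/-- Post-compose the expression component of a step with `·f`; checkmarks
(represented as `Sum.inl ()`) are kept as checkmarks. -/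
def seqAfter (f : SExp A) : Unit ⊕ A × SExp A → Unit ⊕ A × SExp A
  | Sum.inl _ => Sum.inl ()
  | Sum.inr (a, e') => Sum.inr (a, seq e' f)

/-- The small-step semantics `ℓ : SExp → Finset ({✓} ⊕ A × SExp)`, with `✓`
represented as `Sum.inl ()`. -/
def ell : SExp A → Finset (Unit ⊕ A × SExp A)
  | zero => ∅
  | one => {Sum.inl ()}
  | act a => {Sum.inr (a, one)}
  | add e f => ell e ∪ ell f
  | seq e f =>
      ((ell e).image (seqAfter f)).erase (Sum.inl ()) ∪
        (if Sum.inl () ∈ ell e then ell f else ∅)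
  | star e =>
      insert (Sum.inl ()) (((ell e).image (seqAfter (star e))).erase (Sum.inl ()))

/-- `e → ✓`, i.e. `✓ ∈ ℓ(e)`. -/
def Checks (e : SExp A) : Prop := Sum.inl () ∈ ell e

instance (e : SExp A) : Decidable (Checks e) := by unfold Checks; infer_instance

/-- Guardedness of star expressions. -/
def Guarded : SExp A → Prop
  | zero => True
  | one => False
  | act _ => True
  | add e f => Guarded e ∧ Guarded f
  | seq e f => Guarded e ∨ Guarded f
  | star _ => False

/-- Derivability `SL* ⊢ e = f` in equational logic from the semilattice
axioms, the sequencing axioms, the star axiom `(e + 1)* = (e + 0)*`, the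
guarded unrolling axiom, and the fixpoint rule. -/
inductive SLd : SExp A → SExp A → Prop
  | refl (e) : SLd e e
  | symm {e f} : SLd e f → SLd f e
  | trans {e f g} : SLd e f → SLd f g → SLd e g
  | addCongr {e1 f1 e2 f2} : SLd e1 f1 → SLd e2 f2 → SLd (add e1 e2) (add f1 f2)
  | seqCongr {e1 f1 e2 f2} : SLd e1 f1 → SLd e2 f2 → SLd (seq e1 e2) (seq f1 f2)
  | starCongr {e f} : SLd e f → SLd (star e) (star f)
  | addZero (e) : SLd (add e zero) e
  | addIdem (e) : SLd (add e e) e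
  | addComm (e f) : SLd (add e f) (add f e)
  | addAssoc (e f g) : SLd (add (add e f) g) (add e (add f g))
  | oneSeq (e) : SLd (seq one e) e
  | seqOne (e) : SLd (seq e one) e
  | zeroSeq (e) : SLd (seq zero e) zero
  | seqAssoc (e f g) : SLd (seq e (seq f g)) (seq (seq e f) g)
  | distR (e f g) : SLd (seq (add e f) g) (add (seq e g) (seq f g))
  | starOne (e) : SLd (star (add e one)) (star (add e zero))
  | unroll {e} : Guarded e → SLd (star e) (add (seq e (star e)) one)
  | fix {e f g} : SLd g (add (seq e g) f) → Guarded e → SLd g (seq (star e) f)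

/-- The derivative `∂e`. -/
def deriv : SExp A → SExp A
  | zero => zero
  | one => zero
  | act a => act a
  | add e f => add (deriv e) (deriv f)
  | seq e f =>
      if Sum.inl () ∈ ell e then add (seq (deriv e) f) (deriv f)
      else seq (deriv e) f
  | star e => seq (deriv e) (star e)

end SExp

/-!
Every expression `e` is provably equal to `∂e + o(e)`, where the derivative `∂e` is guarded and
`o(e)` is `1` or `0` according to whether `e → ✓`. The star axiom discards `o(e)` under the star,
so `e* = (∂e)*`, and guarded unrolling of `(∂e)*` gives `e* = ∂e·e* + 1`. Restoring `o(e)` then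
costs nothing: `e·e* + 1` exceeds `∂e·e* + 1 = e*` by the summand `o(e)·e*` only, which `e*`
absorbs.
-/

namespace SExp

variable {A : Type}

namespace SLd

attribute [refl] SLd.refl
attribute [symm] SLd.symm
attribute [gcongr] SLd.addCongr SLd.seqCongr SLd.starCongr

instance : IsTrans (SExp A) SLd := ⟨fun _ _ _ => SLd.trans⟩

protected theorem zero_add (e : SExp A) : SLd (add zero e) e :=
  (addComm zero e).trans (addZero e)

protected theorem add_right_comm (e f g : SExp A) : SLd (add (add e f) g) (add (add e g) f) :=
  calc
    SLd (add (add e f) g) (add e (add f g)) := addAssoc e f g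
    SLd _ (add e (add g f)) := by grw [addComm f g]
    SLd _ (add (add e g) f) := (addAssoc e g f).symm

protected theorem add_add_add_comm (e f g h : SExp A) :
    SLd (add (add e f) (add g h)) (add (add e g) (add f h)) :=
  calc
    SLd (add (add e f) (add g h)) (add (add (add e f) g) h) := (addAssoc (add e f) g h).symm
    SLd _ (add (add (add e g) f) h) := by grw [SLd.add_right_comm e f g]
    SLd _ (add (add e g) (add f h)) := addAssoc (add e g) f h

theorem star_unroll_of_star_eq {e d : SExp A} (hd : Guarded d) (h : SLd (star e) (star d)) :
    SLd (star e) (add (seq d (star e)) one) :=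
  calc
    SLd (star e) (star d) := h
    SLd _ (add (seq d (star d)) one) := unroll hd
    SLd _ (add (seq d (star e)) one) := by grw [h]

end SLd

variable [DecidableEq A]

theorem not_checks_zero : ¬ Checks (zero : SExp A) := by simp [Checks, ell]

theorem checks_one : Checks (one : SExp A) := by simp [Checks, ell]

theorem not_checks_act (a : A) : ¬ Checks (act a) := by simp [Checks, ell]

theorem checks_add {e f : SExp A} : Checks (add e f) ↔ Checks e ∨ Checks f := by
  simp [Checks, ell]

theorem checks_seq {e f : SExp A} : Checks (seq e f) ↔ Checks e ∧ Checks f := by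
  by_cases he : Sum.inl () ∈ ell e <;> simp [Checks, ell, he]

theorem checks_star (e : SExp A) : Checks (star e) := by simp [Checks, ell]

theorem deriv_seq_of_checks {e : SExp A} (he : Checks e) (f : SExp A) :
    deriv (seq e f) = add (seq (deriv e) f) (deriv f) :=
  if_pos he

theorem deriv_seq_of_not_checks {e : SExp A} (he : ¬ Checks e) (f : SExp A) :
    deriv (seq e f) = seq (deriv e) f :=
  if_neg he

theorem guarded_deriv (e : SExp A) : Guarded (deriv e) := by
  induction e with
  | zero => trivial
  | one => trivial
  | act _ => trivial
  | add e f ihe ihf => exact ⟨ihe, ihf⟩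
  | seq e f ihe ihf =>
    by_cases he : Checks e
    · rw [deriv_seq_of_checks he]
      exact ⟨.inl ihe, ihf⟩
    · rw [deriv_seq_of_not_checks he]
      exact .inl ihe
  | star e ihe => exact .inl ihe

/-- The output `o(e)`: the part of `e` that the derivative `∂e` forgets, encoded as the
expression `1` when `e → ✓` and `0` otherwise. -/
def output (e : SExp A) : SExp A := if Checks e then one else zero

theorem output_of_checks {e : SExp A} (he : Checks e) : output e = one := if_pos he

theorem output_of_not_checks {e : SExp A} (he : ¬ Checks e) : output e = zero := if_neg he

theorem output_seq_of_checks {e : SExp A} (he : Checks e) (f : SExp A) :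
    output (seq e f) = output f := by
  simp [output, checks_seq, he]

theorem output_seq_of_not_checks {e : SExp A} (he : ¬ Checks e) (f : SExp A) :
    output (seq e f) = zero :=
  output_of_not_checks fun h => he (checks_seq.mp h).1

namespace SLd

theorem output_add (e f : SExp A) : SLd (output (add e f)) (add (output e) (output f)) := by
  by_cases he : Checks e <;> by_cases hf : Checks f <;> simp only [output, checks_add, he, hf]
  · exact (addIdem one).symm
  · exact (addZero one).symm
  · exact (SLd.zero_add one).symm
  · exact (addIdem zero).symm

theorem star_add_output (d e : SExp A) : SLd (star (add d (output e))) (star d) := by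
  by_cases he : Checks e
  · rw [output_of_checks he]
    grw [starOne, addZero]
  · rw [output_of_not_checks he]
    grw [addZero]

theorem add_output_seq_self (e g : SExp A) : SLd (add g (seq (output e) g)) g := by
  by_cases he : Checks e
  · rw [output_of_checks he]
    grw [oneSeq, addIdem]
  · rw [output_of_not_checks he]
    grw [zeroSeq, addZero]

theorem star_unroll_of_eq_add_output {e d : SExp A} (hd : Guarded d)
    (h : SLd e (add d (output e))) : SLd (star e) (add (seq d (star e)) one) :=
  star_unroll_of_star_eq hd ((starCongr h).trans (star_add_output d e))

theorem seq_eq_deriv_add_output {e f : SExp A} (he : SLd e (add (deriv e) (output e)))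
    (hf : SLd f (add (deriv f) (output f))) :
    SLd (seq e f) (add (deriv (seq e f)) (output (seq e f))) := by
  have hef : SLd (seq e f) (add (seq (deriv e) f) (seq (output e) f)) :=
    (seqCongr he (refl f)).trans (distR (deriv e) (output e) f)
  by_cases hc : Checks e
  · rw [deriv_seq_of_checks hc, output_seq_of_checks hc]
    rw [output_of_checks hc] at hef
    calc
      SLd (seq e f) (add (seq (deriv e) f) (seq one f)) := hef
      SLd _ (add (seq (deriv e) f) f) := by grw [oneSeq f]
      SLd _ (add (seq (deriv e) f) (add (deriv f) (output f))) := addCongr (refl _) hf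
      SLd _ (add (add (seq (deriv e) f) (deriv f)) (output f)) := (addAssoc _ _ _).symm
  · rw [deriv_seq_of_not_checks hc, output_seq_of_not_checks hc]
    rw [output_of_not_checks hc] at hef
    calc
      SLd (seq e f) (add (seq (deriv e) f) (seq zero f)) := hef
      SLd _ (add (seq (deriv e) f) zero) := by grw [zeroSeq f]

theorem eq_deriv_add_output (e : SExp A) : SLd e (add (deriv e) (output e)) := by
  induction e with
  | zero =>
    rw [output_of_not_checks not_checks_zero]
    exact (addZero zero).symm
  | one =>
    rw [output_of_checks checks_one]
    exact (SLd.zero_add one).symm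
  | act a =>
    rw [output_of_not_checks (not_checks_act a)]
    exact (addZero (act a)).symm
  | add e f ihe ihf =>
    calc
      SLd (add e f) (add (add (deriv e) (output e)) (add (deriv f) (output f))) :=
        addCongr ihe ihf
      SLd _ (add (add (deriv e) (deriv f)) (add (output e) (output f))) :=
        SLd.add_add_add_comm _ _ _ _
      SLd _ (add (deriv (add e f)) (output (add e f))) :=
        addCongr (refl _) (output_add e f).symm
  | seq e f ihe ihf => exact seq_eq_deriv_add_output ihe ihf
  | star e ihe =>
    rw [output_of_checks (checks_star e)]
    exact star_unroll_of_eq_add_output (guarded_deriv e) ihe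

theorem star_unroll_deriv (e : SExp A) : SLd (star e) (add (seq (deriv e) (star e)) one) :=
  star_unroll_of_eq_add_output (guarded_deriv e) (eq_deriv_add_output e)

end SLd

end SExp

/-- Unrestricted unrolling is derivable in Milner's star fragment: for every
star expression `e` (guarded or not), `SL* ⊢ e* = e·e* + 1`. -/
theorem sl_unrestricted_unrolling {A : Type} [DecidableEq A] (e : SExp A) :
    SExp.SLd (SExp.star e) (SExp.add (SExp.seq e (SExp.star e)) SExp.one) := by
  open SExp SLd in
  symm
  calc
    SLd (add (seq e (star e)) one)
        (add (seq (add (deriv e) (output e)) (star e)) one) :=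
      addCongr (seqCongr (eq_deriv_add_output e) (.refl _)) (.refl _)
    SLd _ (add (add (seq (deriv e) (star e)) (seq (output e) (star e))) one) := by
      grw [distR (deriv e)]
    SLd _ (add (add (seq (deriv e) (star e)) one) (seq (output e) (star e))) :=
      SLd.add_right_comm _ _ _
    SLd _ (add (star e) (seq (output e) (star e))) :=
      addCongr (star_unroll_deriv e).symm (.refl _)
    SLd _ (star e) := add_output_seq_self e (star e)
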